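/- arXiv:1711.08671 — 4 statements merged into one kernel-verified Lean document; each statement's English description precedes it below -/
import Mathlib

section
/- Let α be a positive real number. Then every complex root μ of the equation μ·e^μ + α = 0 has negative real part (Re μ < 0) if and only if α < π/2. -/
/-!
A root satisfies `μ = -α e^{-μ}`. Taking norms, a root in the closed right half-plane has
`|Im μ| ≤ |μ| ≤ α`; taking real parts, a root with `|Im μ| < π / 2` has
`Re μ = -α e^{-Re μ} cos (Im μ) < 0`. So there is no root with `Re μ ≥ 0` when `α < π / 2`.

Conversely, the roots with `Im μ = y ∈ (0, π)` lie on the curve `μ = -y cot y + i y`, whose point at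
height `y` is a root for `α = (y / sin y) e^{-y cot y}`. On `[π / 2, π)` the curve stays in the
closed right half-plane, while this value of `α` goes continuously from `π / 2` to `∞`.
-/

open Set Filter Topology

section RightHalfPlane

variable {a μ : ℂ} {α : ℝ}

theorem mul_exp_add_eq_zero_iff : μ * Complex.exp μ + a = 0 ↔ μ = -a * Complex.exp (-μ) := by
  rw [add_eq_zero_iff_eq_neg, Complex.exp_neg, eq_mul_inv_iff_mul_eq₀ (Complex.exp_ne_zero μ)]

theorem norm_le_of_re_nonneg (hroot : μ * Complex.exp μ + a = 0) (hre : 0 ≤ μ.re) :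
    ‖μ‖ ≤ ‖a‖ := by
  calc ‖μ‖ = ‖-a * Complex.exp (-μ)‖ := congrArg norm (mul_exp_add_eq_zero_iff.1 hroot)
    _ = ‖a‖ * Real.exp (-μ.re) := by rw [norm_mul, norm_neg, Complex.norm_exp, Complex.neg_re]
    _ ≤ ‖a‖ := mul_le_of_le_one_right (norm_nonneg a) (Real.exp_le_one_iff.2 (neg_nonpos.2 hre))

theorem re_eq_of_mul_exp_add_eq_zero (hroot : μ * Complex.exp μ + α = 0) :
    μ.re = -(α * (Real.exp (-μ.re) * Real.cos μ.im)) := by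
  calc μ.re = (-(α : ℂ) * Complex.exp (-μ)).re :=
        congrArg Complex.re (mul_exp_add_eq_zero_iff.1 hroot)
    _ = -(α * (Real.exp (-μ.re) * Real.cos μ.im)) := by
        rw [neg_mul, Complex.neg_re, Complex.re_ofReal_mul, Complex.exp_re, Complex.neg_re,
          Complex.neg_im, Real.cos_neg]

theorem re_neg_of_abs_im_lt_pi_div_two (hα : 0 < α) (hroot : μ * Complex.exp μ + α = 0)
    (him : |μ.im| < Real.pi / 2) : μ.re < 0 := by
  have hcos : 0 < Real.cos μ.im := Real.cos_pos_of_mem_Ioo (abs_lt.1 him)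
  rw [re_eq_of_mul_exp_add_eq_zero hroot, neg_lt_zero]
  positivity

end RightHalfPlane

/-- The curve `-y cot y + i y`, which for `0 < y < π` carries the roots of
`μ e^μ + α = 0` with imaginary part `y`, as `α` ranges over the positive reals. -/
noncomputable def rootCurve (y : ℝ) : ℂ :=
  (-(y * Real.cot y) : ℝ) + y * Complex.I

/-- The parameter `α = (y / sin y) e^{-y cot y}` for which `rootCurve y` is a root of
`μ e^μ + α = 0`; meaningful only where `sin y ≠ 0`. -/
noncomputable def rootParam (y : ℝ) : ℝ :=
  y / Real.sin y * Real.exp (-(y * Real.cot y))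

theorem rootCurve_re (y : ℝ) : (rootCurve y).re = -(y * Real.cot y) := by
  rw [rootCurve, Complex.add_re, Complex.ofReal_re, Complex.re_ofReal_mul, Complex.I_re, mul_zero,
    add_zero]

theorem rootCurve_eq_polar {y : ℝ} (hy : Real.sin y ≠ 0) :
    rootCurve y = -(y / Real.sin y : ℝ) * Complex.exp (-(y * Complex.I)) := by
  have hy' : Complex.sin y ≠ 0 := by exact_mod_cast hy
  rw [rootCurve, ← neg_mul (y : ℂ), Complex.exp_mul_I, Complex.cos_neg, Complex.sin_neg,
    Real.cot_eq_cos_div_sin]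
  push_cast
  field_simp
  ring

theorem rootCurve_mul_exp_add_rootParam {y : ℝ} (hy : Real.sin y ≠ 0) :
    rootCurve y * Complex.exp (rootCurve y) + rootParam y = 0 := by
  have hexp : Complex.exp (rootCurve y) =
      Real.exp (-(y * Real.cot y)) * Complex.exp (y * Complex.I) := by
    rw [rootCurve, Complex.exp_add, Complex.ofReal_exp]
  have hcancel : Complex.exp (-(y * Complex.I)) * Complex.exp (y * Complex.I) = 1 := by
    rw [← Complex.exp_add, neg_add_cancel, Complex.exp_zero]
  rw [hexp, rootCurve_eq_polar hy, rootParam, Complex.ofReal_mul]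
  linear_combination
    -((y / Real.sin y : ℝ) : ℂ) * (Real.exp (-(y * Real.cot y)) : ℂ) * hcancel

theorem rootParam_pi_div_two : rootParam (Real.pi / 2) = Real.pi / 2 := by
  simp [rootParam, Real.cot_eq_cos_div_sin]

theorem continuousOn_rootParam : ContinuousOn rootParam {y | Real.sin y ≠ 0} := by
  have hcot : ContinuousOn Real.cot {y | Real.sin y ≠ 0} := by
    simp only [funext Real.cot_eq_cos_div_sin]
    exact Real.continuousOn_cos.div Real.continuousOn_sin fun _ hy => hy
  have hdiv : ContinuousOn (fun y => y / Real.sin y) {y | Real.sin y ≠ 0} :=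
    continuousOn_id.div Real.continuousOn_sin fun _ hy => hy
  exact hdiv.mul (continuousOn_id.mul hcot).neg.rexp

section QuarterTurn

variable {y : ℝ}

theorem sin_pos_of_mem_Ico_pi_div_two_pi (hy : y ∈ Ico (Real.pi / 2) Real.pi) : 0 < Real.sin y :=
  Real.sin_pos_of_pos_of_lt_pi (Real.pi_div_two_pos.trans_le hy.1) hy.2

theorem rootCurve_re_nonneg (hy : y ∈ Ico (Real.pi / 2) Real.pi) : 0 ≤ (rootCurve y).re := by
  have hcos : Real.cos y ≤ 0 :=
    Real.cos_nonpos_of_pi_div_two_le_of_le hy.1 (by linarith [hy.2, Real.pi_pos])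
  have hcot : Real.cot y ≤ 0 := by
    rw [Real.cot_eq_cos_div_sin]
    exact div_nonpos_of_nonpos_of_nonneg hcos (sin_pos_of_mem_Ico_pi_div_two_pi hy).le
  rw [rootCurve_re, neg_nonneg]
  exact mul_nonpos_of_nonneg_of_nonpos (Real.pi_div_two_pos.le.trans hy.1) hcot

theorem div_sin_le_rootParam (hy : y ∈ Ico (Real.pi / 2) Real.pi) :
    y / Real.sin y ≤ rootParam y := by
  have hexp : 1 ≤ Real.exp (-(y * Real.cot y)) :=
    Real.one_le_exp (rootCurve_re y ▸ rootCurve_re_nonneg hy)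
  have hdiv : 0 ≤ y / Real.sin y :=
    div_nonneg (Real.pi_div_two_pos.le.trans hy.1) (sin_pos_of_mem_Ico_pi_div_two_pi hy).le
  exact le_mul_of_one_le_right hdiv hexp

end QuarterTurn

theorem tendsto_div_sin_nhdsLT_pi :
    Tendsto (fun y => y / Real.sin y) (𝓝[<] Real.pi) atTop := by
  have hsin : Tendsto Real.sin (𝓝[<] Real.pi) (𝓝[>] 0) := by
    refine tendsto_nhdsWithin_iff.2 ⟨?_, ?_⟩
    · exact (Real.continuous_sin.tendsto' _ _ Real.sin_pi).mono_left nhdsWithin_le_nhds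
    · filter_upwards [Ioo_mem_nhdsLT Real.pi_pos] with y hy using Real.sin_pos_of_mem_Ioo hy
  exact (tendsto_id.mono_left nhdsWithin_le_nhds).pos_mul_atTop Real.pi_pos
    hsin.inv_tendsto_nhdsGT_zero

theorem tendsto_rootParam_nhdsLT_pi : Tendsto rootParam (𝓝[<] Real.pi) atTop := by
  refine tendsto_atTop_mono' _ ?_ tendsto_div_sin_nhdsLT_pi
  filter_upwards [Ico_mem_nhdsLT (half_lt_self Real.pi_pos)] with y hy using div_sin_le_rootParam hy

theorem surjOn_rootParam :
    SurjOn rootParam (Ico (Real.pi / 2) Real.pi) (Ici (Real.pi / 2)) := by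
  have hcont : ContinuousOn rootParam (Ico (Real.pi / 2) Real.pi) :=
    continuousOn_rootParam.mono fun _ hy => (sin_pos_of_mem_Ico_pi_div_two_pi hy).ne'
  have hlt : Real.pi / 2 < Real.pi := half_lt_self Real.pi_pos
  have hIVT := isPreconnected_Ico.intermediate_value_Ici (left_mem_Ico.2 hlt)
    (le_principal_iff.2 (Ico_mem_nhdsLT hlt)) hcont tendsto_rootParam_nhdsLT_pi
  rwa [rootParam_pi_div_two] at hIVT

theorem exists_mul_exp_add_eq_zero_re_nonneg {α : ℝ} (hα : Real.pi / 2 ≤ α) :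
    ∃ μ : ℂ, μ * Complex.exp μ + α = 0 ∧ 0 ≤ μ.re := by
  obtain ⟨y, hy, rfl⟩ := surjOn_rootParam hα
  exact ⟨rootCurve y,
    rootCurve_mul_exp_add_rootParam (sin_pos_of_mem_Ico_pi_div_two_pi hy).ne',
    rootCurve_re_nonneg hy⟩

/-- For a positive real `α`, every complex root `μ` of `μ·e^μ + α = 0`
has negative real part if and only if `α < π/2`. -/
theorem all_roots_neg_re_iff (α : ℝ) (hα : 0 < α) :
    (∀ μ : ℂ, μ * Complex.exp μ + (α : ℂ) = 0 → μ.re < 0) ↔ α < Real.pi / 2 := by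
  constructor
  · intro hroots
    by_contra! hge
    obtain ⟨μ, hroot, hre⟩ := exists_mul_exp_add_eq_zero_re_nonneg hge
    exact (hroots μ hroot).not_ge hre
  · intro hlt μ hroot
    by_contra! hre
    have him : |μ.im| < Real.pi / 2 :=
      calc |μ.im| ≤ ‖μ‖ := Complex.abs_im_le_norm μ
        _ ≤ ‖(α : ℂ)‖ := norm_le_of_re_nonneg hroot hre
        _ = α := Complex.norm_of_nonneg hα.le
        _ < Real.pi / 2 := hlt
    exact (re_neg_of_abs_im_lt_pi_div_two hα hroot him).not_ge hre
end

section
/- Define H(η) = (η/sin η)·exp(−η·cos η / sin η) for η with sin η ≠ 0. Then for every natural number k and every η ∈ (2kπ, (2k+1)π), H is differentiable at η with H'(η) = exp(−η·cos η/sin η)·(sin²η − η·sin(2η) + η²)/sin³η ≥ 0; consequently H is monotone increasing on each interval (2kπ, (2k+1)π). -/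
open Real

/-- The function `H(η) = (η/sin η)·exp(−η·cos η / sin η)`. -/
noncomputable def H (η : ℝ) : ℝ := (η / Real.sin η) * Real.exp (-η * Real.cos η / Real.sin η)

/-! The numerator of `H'` is a sum of two squares,
`sin² η − η sin 2η + η² = (η − sin η cos η)² + sin⁴ η`,
so `H'` has the sign of `sin³ η` wherever `sin η ≠ 0`. -/

lemma hasDerivAt_id_div_sin {x : ℝ} (hx : sin x ≠ 0) :
    HasDerivAt (fun y ↦ y / sin y) ((sin x - x * cos x) / sin x ^ 2) x := by
  simpa only [one_mul] using (hasDerivAt_id' x).fun_div (hasDerivAt_sin x) hx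

lemma hasDerivAt_neg_mul_cos_div_sin {x : ℝ} (hx : sin x ≠ 0) :
    HasDerivAt (fun y ↦ -y * cos y / sin y) ((x - sin x * cos x) / sin x ^ 2) x := by
  refine (((hasDerivAt_id' x).fun_neg.fun_mul (hasDerivAt_cos x)).fun_div
    (hasDerivAt_sin x) hx).congr_deriv ?_
  congr 1
  linear_combination x * sin_sq_add_cos_sq x

lemma hasDerivAt_H {η : ℝ} (hη : sin η ≠ 0) :
    HasDerivAt H
      (exp (-η * cos η / sin η) * (sin η ^ 2 - η * sin (2 * η) + η ^ 2) / sin η ^ 3) η := by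
  refine ((hasDerivAt_id_div_sin hη).fun_mul
    (hasDerivAt_neg_mul_cos_div_sin hη).exp).congr_deriv ?_
  rw [sin_two_mul]
  field_simp
  ring

lemma sin_sq_sub_mul_sin_two_mul_add_sq (t x : ℝ) :
    sin x ^ 2 - t * sin (2 * x) + t ^ 2 = (t - sin x * cos x) ^ 2 + sin x ^ 4 := by
  rw [sin_two_mul]
  linear_combination -sin x ^ 2 * sin_sq_add_cos_sq x

lemma deriv_H_pos {η : ℝ} (hη : 0 < sin η) : 0 < deriv H η := by
  rw [(hasDerivAt_H hη.ne').deriv, sin_sq_sub_mul_sin_two_mul_add_sq]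
  positivity

lemma strictMonoOn_H_of_sin_pos {s : Set ℝ} (hs : Convex ℝ s) (hsin : ∀ η ∈ s, 0 < sin η) :
    StrictMonoOn H s :=
  strictMonoOn_of_deriv_pos hs
    (fun η hη ↦ (hasDerivAt_H (hsin η hη).ne').continuousAt.continuousWithinAt)
    (fun η hη ↦ deriv_H_pos (hsin η (interior_subset hη)))

lemma sin_pos_of_mem_Ioo_two_mul_int_mul_pi {k : ℤ} {x : ℝ}
    (hx : x ∈ Set.Ioo (2 * k * π) ((2 * k + 1) * π)) : 0 < sin x := by
  rw [← sin_sub_int_mul_two_pi x k]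
  apply sin_pos_of_pos_of_lt_pi
  · linarith [hx.1]
  · linarith [hx.2]

theorem H_hasDerivAt_and_monotoneOn_general (k : ℤ) :
    (∀ η ∈ Set.Ioo (2 * k * π) ((2 * k + 1) * π),
      HasDerivAt H
        (exp (-η * cos η / sin η) * (sin η ^ 2 - η * sin (2 * η) + η ^ 2) / sin η ^ 3) η ∧
      0 < exp (-η * cos η / sin η) * (sin η ^ 2 - η * sin (2 * η) + η ^ 2) / sin η ^ 3) ∧
    StrictMonoOn H (Set.Ioo (2 * k * π) ((2 * k + 1) * π)) := by
  refine ⟨fun η hη ↦ ?_, strictMonoOn_H_of_sin_pos (convex_Ioo _ _)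
    fun _ ↦ sin_pos_of_mem_Ioo_two_mul_int_mul_pi⟩
  have hsin : 0 < sin η := sin_pos_of_mem_Ioo_two_mul_int_mul_pi hη
  have hderiv := hasDerivAt_H hsin.ne'
  exact ⟨hderiv, hderiv.deriv ▸ deriv_H_pos hsin⟩

/-- On each interval `(2kπ, (2k+1)π)`, `H` is differentiable with
nonnegative derivative `exp(−η·cos η/sin η)·(sin²η − η·sin(2η) + η²)/sin³η`,
and consequently `H` is monotone increasing there. -/
theorem H_hasDerivAt_and_monotoneOn (k : ℕ) :
    (∀ η ∈ Set.Ioo (2 * k * π) ((2 * k + 1) * π),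
      HasDerivAt H
        (Real.exp (-η * Real.cos η / Real.sin η) *
          (Real.sin η ^ 2 - η * Real.sin (2 * η) + η ^ 2) / Real.sin η ^ 3) η ∧
      Real.exp (-η * Real.cos η / Real.sin η) *
          (Real.sin η ^ 2 - η * Real.sin (2 * η) + η ^ 2) / Real.sin η ^ 3 ≥ 0) ∧
    MonotoneOn H (Set.Ioo (2 * k * π) ((2 * k + 1) * π)) := by
  obtain ⟨hderiv, hmono⟩ := H_hasDerivAt_and_monotoneOn_general k
  exact ⟨fun η hη ↦ (hderiv η hη).imp_right le_of_lt, hmono.monotoneOn⟩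
end

section
/- Let r, L > 0 and let k_I ∈ (0, k_I*) where k_I* = (r/(2L))·Π(2−√2). Then there exist constants M ≥ 1 and ω > 0 such that for every pair (φ, ξ) with φ : [0,L] × [0,∞) → ℝ continuously differentiable and ξ : [0,∞) → ℝ continuously differentiable satisfying φ_t(x,t) = −r φ_x(x,t) for all x ∈ (0,L), ξ'(t) = φ(L,t), and φ(0,t) = −k_I ξ(t) for all t ≥ 0, one has ∫₀^L φ(x,t)² dx + ξ(t)² ≤ M e^{−ωt} (∫₀^L φ(x,0)² dx + ξ(0)²) for all t ≥ 0. -/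
/-- The function `Π(z) = √(z(2−z))·e^{−z/2}` on `[0,2]`. -/
noncomputable def PiFun (z : ℝ) : ℝ := Real.sqrt (z * (2 - z)) * Real.exp (-z / 2)

/-!
Integrating along the characteristics `x - r t = const` turns the closed loop into the delay
equation `ξ'(t) = -k ξ(t - T)` with delay `T = L / r`, and `φ` into a delayed copy of `-k ξ` once
the initial profile has left the domain. The delay equation is a perturbation of `ξ' = -k ξ`:
`ξ' + k ξ = k (ξ(t) - ξ(t - T))`, and the increment of `ξ` over one delay is at most `k T` times
the size of `ξ` on the preceding delay. So when `k T < 1` an exponential bound of small enough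
rate propagates from one delay interval to the next. The gains allowed in the theorem satisfy
`k T < 1`, because `Π ≤ 1`.
-/

open Set Real MeasureTheory

theorem sq_intervalIntegral_le {f : ℝ → ℝ} {a b : ℝ} (hab : a ≤ b)
    (hf : IntervalIntegrable f volume a b)
    (hf_sq : IntervalIntegrable (fun x => f x ^ 2) volume a b) :
    (∫ x in a..b, f x) ^ 2 ≤ (b - a) * ∫ x in a..b, f x ^ 2 := by
  rcases hab.eq_or_lt with rfl | hlt
  · simp
  have jensen : (⨍ x in a..b, f x) ^ 2 ≤ ⨍ x in a..b, f x ^ 2 := by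
    rw [uIoc_of_le hab]
    exact even_two.convexOn_pow.map_set_average_le (by fun_prop) isClosed_univ (by simp [hlt])
      (by simp) (by simp) hf.1 hf_sq.1
  have hpos : 0 < b - a := sub_pos.2 hlt
  rw [interval_average_eq_div, interval_average_eq_div, div_pow, div_le_div_iff₀ (by positivity)
    hpos] at jensen
  nlinarith

variable {E : Type*} [NormedAddCommGroup E]

/-- The squared norm of the state `(φ(·, t), ξ(t))` in `L²(0, L) × E`. -/
noncomputable def energy (L : ℝ) (φ : ℝ → ℝ → E) (ξ : ℝ → E) (t : ℝ) : ℝ :=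
  (∫ x in (0 : ℝ)..L, ‖φ x t‖ ^ 2) + ‖ξ t‖ ^ 2

theorem energy_nonneg {L : ℝ} (hL : 0 ≤ L) (φ : ℝ → ℝ → E) (ξ : ℝ → E) (t : ℝ) :
    0 ≤ energy L φ ξ t :=
  add_nonneg (intervalIntegral.integral_nonneg hL fun _ _ => sq_nonneg _) (sq_nonneg _)

variable [NormedSpace ℝ E]

/-- `ξ` solves the delay equation `ξ'(t) = -k ξ(t - T)` for `t ≥ T`; at `t = T` the derivative is
taken from the right. -/
def IsDelaySolution (T k : ℝ) (ξ : ℝ → E) : Prop :=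
  ∀ t ∈ Ici T, HasDerivWithinAt ξ (-k • ξ (t - T)) (Ici T) t

namespace IsDelaySolution

variable {T k ω C D a b t : ℝ} {ξ : ℝ → E}

theorem continuousOn_Icc (h : IsDelaySolution T k ξ) (ha : T ≤ a) : ContinuousOn ξ (Icc a b) :=
  fun t ht => ((h t (ha.trans ht.1)).mono (Icc_subset_Ici_self.trans (Ici_subset_Ici.2 ha)))
    |>.continuousWithinAt

theorem hasDerivWithinAt_Ici (h : IsDelaySolution T k ξ) (ht : T ≤ t) :
    HasDerivWithinAt ξ (-k • ξ (t - T)) (Ici t) t :=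
  (h t ht).mono (Ici_subset_Ici.2 ht)

theorem norm_sub_le (h : IsDelaySolution T k ξ) (hk : 0 ≤ k) (ha : T ≤ a) (hab : a ≤ b)
    (hC : ∀ s ∈ Icc (a - T) (b - T), ‖ξ s‖ ≤ C) : ‖ξ b - ξ a‖ ≤ k * C * (b - a) := by
  refine norm_image_sub_le_of_norm_deriv_right_le_segment (h.continuousOn_Icc ha)
    (fun s hs => h.hasDerivWithinAt_Ici (ha.trans hs.1)) (fun s hs => ?_) b (right_mem_Icc.2 hab)
  rw [norm_smul, norm_neg, norm_of_nonneg hk]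
  gcongr
  exact hC _ ⟨by linarith [hs.1], by linarith [hs.2]⟩

theorem hasDerivWithinAt_exp_smul (h : IsDelaySolution T k ξ) (ht : T ≤ t) :
    HasDerivWithinAt (fun s => exp (k * s) • ξ s) (exp (k * t) • k • (ξ t - ξ (t - T)))
      (Ici t) t := by
  have hexp : HasDerivAt (fun s => exp (k * s)) (exp (k * t) * k) t := by
    simpa using ((hasDerivAt_id t).const_mul k).exp
  refine (hexp.hasDerivWithinAt.smul (h.hasDerivWithinAt_Ici ht)).congr_deriv ?_
  module

theorem norm_sub_delayed_le (h : IsDelaySolution T k ξ) (hT : 0 ≤ T) (hk : 0 ≤ k) (hω : 0 ≤ ω)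
    (ht : 2 * T ≤ t) (hD : ∀ s ∈ Icc 0 (t - T), ‖ξ s‖ ≤ D * exp (-ω * s)) :
    ‖ξ t - ξ (t - T)‖ ≤ k * T * exp (2 * ω * T) * (D * exp (-ω * t)) := by
  have hD0 : 0 ≤ D := by simpa using (norm_nonneg _).trans (hD 0 ⟨le_rfl, by linarith⟩)
  have hpast : ∀ s ∈ Icc (t - T - T) (t - T), ‖ξ s‖ ≤ D * exp (-ω * (t - 2 * T)) := by
    intro s hs
    refine (hD s ⟨by linarith [hs.1], hs.2⟩).trans ?_
    gcongr D * exp ?_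
    nlinarith [hs.1]
  calc ‖ξ t - ξ (t - T)‖ ≤ k * (D * exp (-ω * (t - 2 * T))) * (t - (t - T)) :=
        h.norm_sub_le hk (by linarith) (by linarith) hpast
    _ = k * T * exp (2 * ω * T) * (D * exp (-ω * t)) := by
        rw [show -ω * (t - 2 * T) = 2 * ω * T + -ω * t by ring, exp_add]
        ring

theorem norm_le_mul_exp_extend (h : IsDelaySolution T k ξ) (hT : 0 ≤ T) (hk : 0 ≤ k) (hω : 0 ≤ ω)
    (hrate : k * (k * T * exp (2 * ω * T)) ≤ k - ω) (ha : 2 * T ≤ a)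
    (hD : ∀ s ∈ Icc 0 a, ‖ξ s‖ ≤ D * exp (-ω * s)) :
    ∀ s ∈ Icc a (a + T), ‖ξ s‖ ≤ D * exp (-ω * s) := by
  have hD0 : 0 ≤ D := by simpa using (norm_nonneg _).trans (hD 0 ⟨le_rfl, by linarith⟩)
  have norm_exp_smul : ∀ s v, ‖exp (k * s) • (v : E)‖ = exp (k * s) * ‖v‖ := fun s v => by
    rw [norm_smul, norm_of_nonneg (exp_pos _).le]
  have exp_split : ∀ s, D * exp ((k - ω) * s) = exp (k * s) * (D * exp (-ω * s)) := fun s => by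
    rw [mul_left_comm, ← exp_add]
    ring_nf
  have hbarrier : ∀ s, HasDerivAt (fun s => D * exp ((k - ω) * s))
      (D * (exp ((k - ω) * s) * (k - ω))) s := fun s => by
    simpa using (((hasDerivAt_id s).const_mul (k - ω)).exp).const_mul D
  have weighted : ∀ s ∈ Icc a (a + T), ‖exp (k * s) • ξ s‖ ≤ D * exp ((k - ω) * s) := by
    refine image_norm_le_of_norm_deriv_right_le_deriv_boundary
      (ContinuousOn.fun_smul (by fun_prop) (h.continuousOn_Icc (by linarith)))
      (fun s hs => h.hasDerivWithinAt_exp_smul (by linarith [hs.1])) ?_ hbarrier fun s hs => ?_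
    · rw [norm_exp_smul, exp_split]
      gcongr
      exact hD a ⟨by linarith, le_rfl⟩
    · have increment := h.norm_sub_delayed_le hT hk hω (ha.trans hs.1)
        fun u hu => hD u ⟨hu.1, by linarith [hu.2, hs.2]⟩
      calc ‖exp (k * s) • k • (ξ s - ξ (s - T))‖
          ≤ exp (k * s) * (k * (k * T * exp (2 * ω * T) * (D * exp (-ω * s)))) := by
            rw [norm_exp_smul, norm_smul, norm_of_nonneg hk]
            gcongr
        _ = D * exp ((k - ω) * s) * (k * (k * T * exp (2 * ω * T))) := by rw [exp_split]; ring
        _ ≤ D * exp ((k - ω) * s) * (k - ω) := by gcongr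
        _ = D * (exp ((k - ω) * s) * (k - ω)) := mul_assoc _ _ _
  intro s hs
  have hweighted := weighted s hs
  rw [norm_exp_smul, exp_split] at hweighted
  exact le_of_mul_le_mul_left hweighted (exp_pos _)

theorem norm_le_mul_exp_of_initial (h : IsDelaySolution T k ξ) (hT : 0 < T) (hk : 0 ≤ k)
    (hω : 0 ≤ ω) (hrate : k * (k * T * exp (2 * ω * T)) ≤ k - ω)
    (hD : ∀ s ∈ Icc 0 (2 * T), ‖ξ s‖ ≤ D * exp (-ω * s)) (ht : 0 ≤ t) :
    ‖ξ t‖ ≤ D * exp (-ω * t) := by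
  have key : ∀ n : ℕ, ∀ s ∈ Icc 0 ((n + 2) * T), ‖ξ s‖ ≤ D * exp (-ω * s) := by
    intro n
    induction n with
    | zero => simpa using hD
    | succ n ih =>
      intro s hs
      rcases le_total s ((n + 2) * T) with hle | hge
      · exact ih s ⟨hs.1, hle⟩
      · refine h.norm_le_mul_exp_extend hT.le hk hω hrate ?_ ih s ⟨hge, hs.2.trans_eq ?_⟩
        · gcongr
          simp
        · push_cast
          ring
  obtain ⟨n, hn⟩ := exists_nat_ge (t / T)
  exact key n t ⟨ht, by rw [div_le_iff₀ hT] at hn; linarith⟩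

theorem norm_le_of_initial (h : IsDelaySolution T k ξ) (hT : 0 ≤ T) (hk : 0 ≤ k)
    (hC : ∀ s ∈ Icc 0 T, ‖ξ s‖ ≤ C) (ht : t ∈ Icc 0 (2 * T)) : ‖ξ t‖ ≤ (1 + k * T) * C := by
  have hC0 : 0 ≤ C := (norm_nonneg _).trans (hC 0 ⟨le_rfl, hT⟩)
  rcases le_total t T with hle | hge
  · calc ‖ξ t‖ ≤ 1 * C := by simpa using hC t ⟨ht.1, hle⟩
      _ ≤ (1 + k * T) * C := by gcongr; simpa using mul_nonneg hk hT
  · have increment : ‖ξ t - ξ T‖ ≤ k * C * (t - T) :=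
      h.norm_sub_le hk le_rfl hge fun s hs => hC s ⟨by linarith [hs.1], by linarith [hs.2, ht.2]⟩
    calc ‖ξ t‖ ≤ ‖ξ T‖ + ‖ξ t - ξ T‖ := norm_le_norm_add_norm_sub' _ _
      _ ≤ C + k * C * T := by
        gcongr
        · exact hC T ⟨hT, le_rfl⟩
        · refine increment.trans ?_
          gcongr
          linarith [ht.2]
      _ = (1 + k * T) * C := by ring

theorem norm_le_mul_exp (h : IsDelaySolution T k ξ) (hT : 0 < T) (hk : 0 ≤ k) (hω : 0 ≤ ω)
    (hrate : k * (k * T * exp (2 * ω * T)) ≤ k - ω) (hC : ∀ s ∈ Icc 0 T, ‖ξ s‖ ≤ C) (ht : 0 ≤ t) :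
    ‖ξ t‖ ≤ (1 + k * T) * C * exp (2 * ω * T) * exp (-ω * t) := by
  refine h.norm_le_mul_exp_of_initial hT hk hω hrate (fun s hs => ?_) ht
  have hC0 : 0 ≤ C := (norm_nonneg _).trans (hC 0 ⟨le_rfl, hT.le⟩)
  rw [mul_assoc, ← exp_add]
  refine (h.norm_le_of_initial hT.le hk hC hs).trans (le_mul_of_one_le_right (by positivity) ?_)
  exact one_le_exp (by nlinarith [hs.2])

end IsDelaySolution

theorem exists_pos_decay_rate {k T : ℝ} (hk : 0 < k) (hkT : k * T < 1) :
    ∃ ω > 0, k * (k * T * exp (2 * ω * T)) ≤ k - ω := by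
  have hcont : Continuous fun ω => k * (k * T * exp (2 * ω * T)) + ω := by fun_prop
  have hzero : k * (k * T * exp (2 * 0 * T)) + 0 < k := by
    simpa using mul_lt_of_lt_one_right hk hkT
  have hsmall := (hcont.tendsto 0).eventually_lt_const hzero
  obtain ⟨ω, hω, hpos⟩ :=
    ((hsmall.filter_mono nhdsWithin_le_nhds).and (self_mem_nhdsWithin (s := Ioi 0))).exists
  exact ⟨ω, hpos, by linarith⟩

theorem hasDerivAt_zero_along_characteristic {φ : ℝ → ℝ → E} {r x t σ : ℝ}
    (hφ : DifferentiableAt ℝ (fun p : ℝ × ℝ => φ p.1 p.2) (x + r * σ, t + σ))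
    (htransport : deriv (fun τ => φ (x + r * σ) τ) (t + σ) =
      -r • deriv (fun y => φ y (t + σ)) (x + r * σ)) :
    HasDerivAt (fun s => φ (x + r * s) (t + s)) 0 σ := by
  set F := fderiv ℝ (fun p : ℝ × ℝ => φ p.1 p.2) (x + r * σ, t + σ)
  have hF : HasFDerivAt (fun p : ℝ × ℝ => φ p.1 p.2) F (x + r * σ, t + σ) := hφ.hasFDerivAt
  have hspace : HasDerivAt (fun y => φ y (t + σ)) (F (1, 0)) (x + r * σ) :=
    hF.comp_hasDerivAt (f := fun y => (y, t + σ)) _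
      ((hasDerivAt_id' _).prodMk (hasDerivAt_const _ _))
  have htime : HasDerivAt (fun τ => φ (x + r * σ) τ) (F (0, 1)) (t + σ) :=
    hF.comp_hasDerivAt (f := fun τ => (x + r * σ, τ)) _
      ((hasDerivAt_const _ _).prodMk (hasDerivAt_id' _))
  have hposition : HasDerivAt (fun s => x + r * s) r σ := by
    simpa using ((hasDerivAt_id σ).const_mul r).const_add x
  have hcurve : HasDerivAt (fun s => φ (x + r * s) (t + s)) (F (r, 1)) σ :=
    hF.comp_hasDerivAt (f := fun s => (x + r * s, t + s)) _
      (hposition.prodMk ((hasDerivAt_id' σ).const_add t))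
  rw [hspace.deriv, htime.deriv] at htransport
  have hsplit : ((r, 1) : ℝ × ℝ) = r • (1, 0) + (0, 1) := by simp
  refine hcurve.congr_deriv ?_
  rw [hsplit, map_add, map_smul, htransport, neg_smul, add_neg_cancel]

/-- `(φ, ξ)` solves the closed loop `φ_t = -r φ_x`, `ξ' = φ(L, ·)`, `φ(0, ·) = -k ξ` on
`[0, L] × [0, ∞)`. The differential equations are only imposed in the interior, and the boundary
values are tied to them by continuity. -/
structure IsClosedLoopSolution (r L k : ℝ) (φ : ℝ → ℝ → E) (ξ : ℝ → E) : Prop where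
  continuousOn_profile : ContinuousOn (fun p : ℝ × ℝ => φ p.1 p.2) (Icc 0 L ×ˢ Ici 0)
  differentiableAt_profile : ∀ x ∈ Ioo 0 L, ∀ t > 0,
    DifferentiableAt ℝ (fun p : ℝ × ℝ => φ p.1 p.2) (x, t)
  transport : ∀ x ∈ Ioo 0 L, ∀ t > 0,
    deriv (fun τ => φ x τ) t = -r • deriv (fun y => φ y t) x
  continuousOn_integrator : ContinuousOn ξ (Ici 0)
  hasDerivAt_integrator : ∀ t > 0, HasDerivAt ξ (φ L t) t
  inflow : ∀ t ≥ 0, φ 0 t = -k • ξ t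

namespace IsClosedLoopSolution

variable {r L k ω A C a b x t s : ℝ} {φ : ℝ → ℝ → E} {ξ : ℝ → E}

theorem of_contDiffOn (hφ : ContDiffOn ℝ 1 (fun p : ℝ × ℝ => φ p.1 p.2) (Icc 0 L ×ˢ Ici 0))
    (hξ : ContDiffOn ℝ 1 ξ (Ici 0))
    (htransport : ∀ x ∈ Ioo 0 L, ∀ t > 0,
      deriv (fun τ => φ x τ) t = -r • deriv (fun y => φ y t) x)
    (hintegrator : ∀ t > 0, deriv ξ t = φ L t) (hinflow : ∀ t ≥ 0, φ 0 t = -k • ξ t) :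
    IsClosedLoopSolution r L k φ ξ where
  continuousOn_profile := hφ.continuousOn
  differentiableAt_profile _ hx _ ht :=
    (hφ.contDiffAt (prod_mem_nhds (Icc_mem_nhds hx.1 hx.2) (Ici_mem_nhds ht))).differentiableAt
      one_ne_zero
  transport := htransport
  continuousOn_integrator := hξ.continuousOn
  hasDerivAt_integrator t ht := hintegrator t ht ▸
    ((hξ.contDiffAt (Ici_mem_nhds ht)).differentiableAt one_ne_zero).hasDerivAt
  inflow := hinflow

theorem apply_add_eq (h : IsClosedLoopSolution r L k φ ξ) (hr : 0 < r) (hx : 0 ≤ x) (ht : 0 ≤ t)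
    (hs : 0 ≤ s) (hxs : x + r * s ≤ L) : φ (x + r * s) (t + s) = φ x t := by
  have hcont : ContinuousOn (fun σ => φ (x + r * σ) (t + σ)) (Icc 0 s) := by
    refine h.continuousOn_profile.comp (f := fun σ => (x + r * σ, t + σ)) (by fun_prop) ?_
    exact fun σ hσ => ⟨⟨by nlinarith [hσ.1], by nlinarith [hσ.2]⟩, add_nonneg ht hσ.1⟩
  have hderiv : ∀ σ ∈ Ioo 0 s, HasDerivAt (fun σ => φ (x + r * σ) (t + σ)) 0 σ := by
    intro σ hσ
    have hmem : x + r * σ ∈ Ioo 0 L := ⟨by nlinarith [hσ.1], by nlinarith [hσ.2]⟩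
    have hpos : 0 < t + σ := add_pos_of_nonneg_of_pos ht hσ.1
    exact hasDerivAt_zero_along_characteristic (h.differentiableAt_profile _ hmem _ hpos)
      (h.transport _ hmem _ hpos)
  have hconst := norm_sub_le_integral_of_norm_deriv_le_of_le (B := 0) hs hcont
    (fun σ hσ => (hderiv σ hσ).differentiableAt.differentiableWithinAt)
    (.of_forall fun σ hσ => by simp [(hderiv σ hσ).deriv]) intervalIntegrable_const
  simpa [sub_eq_zero] using hconst

theorem apply_eq_initial (h : IsClosedLoopSolution r L k φ ξ) (hr : 0 < r) (ht : 0 ≤ t)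
    (hrt : r * t ≤ x) (hxL : x ≤ L) : φ x t = φ (x - r * t) 0 := by
  simpa using h.apply_add_eq hr (sub_nonneg.2 hrt) le_rfl ht (by simpa using hxL)

theorem apply_eq_delayed (h : IsClosedLoopSolution r L k φ ξ) (hr : 0 < r) (hx : x ∈ Icc 0 L)
    (hxt : x ≤ r * t) : φ x t = -k • ξ (t - x / r) := by
  have hcancel : r * (x / r) = x := mul_div_cancel₀ x hr.ne'
  have hdelay : 0 ≤ t - x / r := sub_nonneg.2 ((div_le_iff₀' hr).2 hxt)
  have hchar := h.apply_add_eq hr le_rfl hdelay (div_nonneg hx.1 hr.le)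
    (by simpa [hcancel] using hx.2)
  rw [← h.inflow _ hdelay, ← hchar, hcancel, zero_add, sub_add_cancel]

theorem isDelaySolution (h : IsClosedLoopSolution r L k φ ξ) (hr : 0 < r) (hL : 0 < L) :
    IsDelaySolution (L / r) k ξ := by
  intro t ht
  have hLt : L ≤ r * t := (div_le_iff₀' hr).1 ht
  rw [← h.apply_eq_delayed hr (right_mem_Icc.2 hL.le) hLt]
  exact (h.hasDerivAt_integrator t ((div_pos hL hr).trans_le ht)).hasDerivWithinAt

theorem continuousOn_slice (h : IsClosedLoopSolution r L k φ ξ) (ht : 0 ≤ t) :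
    ContinuousOn (fun x => φ x t) (Icc 0 L) :=
  h.continuousOn_profile.comp (f := fun x => (x, t)) (by fun_prop) fun _ hx => ⟨hx, ht⟩

theorem continuousOn_outlet (h : IsClosedLoopSolution r L k φ ξ) (hL : 0 ≤ L) :
    ContinuousOn (fun t => φ L t) (Ici 0) :=
  h.continuousOn_profile.comp (f := fun t => (L, t)) (by fun_prop)
    fun _ ht => ⟨right_mem_Icc.2 hL, ht⟩

theorem intervalIntegrable_norm_sq (h : IsClosedLoopSolution r L k φ ξ) (ht : 0 ≤ t) (ha : 0 ≤ a)
    (hab : a ≤ b) (hb : b ≤ L) : IntervalIntegrable (fun x => ‖φ x t‖ ^ 2) volume a b := by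
  refine ContinuousOn.intervalIntegrable ?_
  rw [uIcc_of_le hab]
  exact ((h.continuousOn_slice ht).mono (Icc_subset_Icc ha hb)).norm.pow 2

theorem integral_initial_le (h : IsClosedLoopSolution r L k φ ξ) (ha : 0 ≤ a) (hab : a ≤ b)
    (hb : b ≤ L) : ∫ x in a..b, ‖φ x 0‖ ^ 2 ≤ ∫ x in (0 : ℝ)..L, ‖φ x 0‖ ^ 2 :=
  intervalIntegral.integral_mono_interval ha hab hb (.of_forall fun _ => sq_nonneg _)
    (h.intervalIntegrable_norm_sq le_rfl le_rfl (ha.trans (hab.trans hb)) le_rfl)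

theorem integral_outlet_le (h : IsClosedLoopSolution r L k φ ξ) (hr : 0 < r) (ht : 0 ≤ t)
    (htL : r * t ≤ L) :
    ∫ s in (0 : ℝ)..t, ‖φ L s‖ ^ 2 ≤ r⁻¹ * ∫ x in (0 : ℝ)..L, ‖φ x 0‖ ^ 2 := by
  have hrt : 0 ≤ r * t := mul_nonneg hr.le ht
  calc ∫ s in (0 : ℝ)..t, ‖φ L s‖ ^ 2 = ∫ s in (0 : ℝ)..t, ‖φ (L - r * s) 0‖ ^ 2 := by
        refine intervalIntegral.integral_congr fun s hs => ?_
        rw [uIcc_of_le ht] at hs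
        simp only [h.apply_eq_initial hr hs.1 (by nlinarith [hs.2]) le_rfl]
    _ = r⁻¹ * ∫ x in (L - r * t)..L, ‖φ x 0‖ ^ 2 := by
        rw [intervalIntegral.integral_comp_sub_mul (fun x => ‖φ x 0‖ ^ 2) hr.ne' L, mul_zero,
          sub_zero, smul_eq_mul]
    _ ≤ r⁻¹ * ∫ x in (0 : ℝ)..L, ‖φ x 0‖ ^ 2 := by
        gcongr
        exact h.integral_initial_le (by linarith) (by linarith) le_rfl

theorem norm_sq_integrator_le (h : IsClosedLoopSolution r L k φ ξ) (hr : 0 < r) (hL : 0 ≤ L)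
    (ht : t ∈ Icc 0 (L / r)) : ‖ξ t‖ ^ 2 ≤ 2 * (1 + L / r * r⁻¹) * energy L φ ξ 0 := by
  have hcont : ContinuousOn (fun s => ‖φ L s‖) (uIcc 0 t) :=
    ((h.continuousOn_outlet hL).mono (uIcc_of_le ht.1 ▸ Icc_subset_Ici_self)).norm
  have hvar : ‖ξ t - ξ 0‖ ≤ ∫ s in (0 : ℝ)..t, ‖φ L s‖ :=
    norm_sub_le_integral_of_norm_deriv_le_of_le ht.1
      (h.continuousOn_integrator.mono Icc_subset_Ici_self)
      (fun s hs => (h.hasDerivAt_integrator s hs.1).differentiableAt.differentiableWithinAt)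
      (.of_forall fun s hs => (congrArg norm (h.hasDerivAt_integrator s hs.1).deriv).le)
      hcont.intervalIntegrable
  have hvar_sq : ‖ξ t - ξ 0‖ ^ 2 ≤ L / r * (r⁻¹ * ∫ x in (0 : ℝ)..L, ‖φ x 0‖ ^ 2) :=
    calc ‖ξ t - ξ 0‖ ^ 2 ≤ (∫ s in (0 : ℝ)..t, ‖φ L s‖) ^ 2 := by gcongr
      _ ≤ (t - 0) * ∫ s in (0 : ℝ)..t, ‖φ L s‖ ^ 2 :=
        sq_intervalIntegral_le ht.1 hcont.intervalIntegrable (hcont.pow 2).intervalIntegrable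
      _ ≤ L / r * (r⁻¹ * ∫ x in (0 : ℝ)..L, ‖φ x 0‖ ^ 2) := by
        rw [sub_zero]
        exact mul_le_mul ht.2 (h.integral_outlet_le hr ht.1 ((le_div_iff₀' hr).1 ht.2))
          (intervalIntegral.integral_nonneg ht.1 fun _ _ => sq_nonneg _) (by positivity)
  have hprofile : 0 ≤ ∫ x in (0 : ℝ)..L, ‖φ x 0‖ ^ 2 :=
    intervalIntegral.integral_nonneg hL fun _ _ => sq_nonneg _
  have hslack : 0 ≤ L / r * r⁻¹ * ‖ξ 0‖ ^ 2 := by positivity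
  calc ‖ξ t‖ ^ 2 ≤ (‖ξ 0‖ + ‖ξ t - ξ 0‖) ^ 2 := by gcongr; exact norm_le_norm_add_norm_sub' _ _
    _ ≤ 2 * (‖ξ 0‖ ^ 2 + ‖ξ t - ξ 0‖ ^ 2) := add_sq_le
    _ ≤ 2 * (1 + L / r * r⁻¹) * energy L φ ξ 0 := by unfold energy; linarith

theorem integral_transported_le (h : IsClosedLoopSolution r L k φ ξ) (hr : 0 < r) (ht : 0 ≤ t)
    (htL : r * t ≤ L) :
    ∫ x in (r * t)..L, ‖φ x t‖ ^ 2 ≤ ∫ x in (0 : ℝ)..L, ‖φ x 0‖ ^ 2 := by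
  have hrt : 0 ≤ r * t := mul_nonneg hr.le ht
  calc ∫ x in (r * t)..L, ‖φ x t‖ ^ 2 = ∫ x in (r * t)..L, ‖φ (x - r * t) 0‖ ^ 2 := by
        refine intervalIntegral.integral_congr fun x hx => ?_
        rw [uIcc_of_le htL] at hx
        simp only [h.apply_eq_initial hr ht hx.1 hx.2]
    _ = ∫ x in (0 : ℝ)..(L - r * t), ‖φ x 0‖ ^ 2 := by
        rw [intervalIntegral.integral_comp_sub_right (fun x => ‖φ x 0‖ ^ 2), sub_self]
    _ ≤ ∫ x in (0 : ℝ)..L, ‖φ x 0‖ ^ 2 :=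
        h.integral_initial_le le_rfl (by linarith) (by linarith)

theorem integral_inflow_le (h : IsClosedLoopSolution r L k φ ξ) (hr : 0 < r) (hb : b ∈ Icc 0 L)
    (hbt : b ≤ r * t) (hC : ∀ s ≥ 0, t - L / r ≤ s → ‖ξ s‖ ^ 2 ≤ C) :
    ∫ x in (0 : ℝ)..b, ‖φ x t‖ ^ 2 ≤ L * (k ^ 2 * C) := by
  have ht : 0 ≤ t := nonneg_of_mul_nonneg_right (hb.1.trans hbt) hr
  have hC0 : 0 ≤ C :=
    (sq_nonneg _).trans (hC t ht (sub_le_self _ (div_nonneg (hb.1.trans hb.2) hr.le)))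
  have hpointwise : ∀ x ∈ Icc 0 b, ‖φ x t‖ ^ 2 ≤ k ^ 2 * C := by
    intro x hx
    rw [h.apply_eq_delayed hr ⟨hx.1, hx.2.trans hb.2⟩ (hx.2.trans hbt), norm_smul, norm_neg,
      mul_pow, norm_eq_abs, sq_abs]
    gcongr
    refine hC _ (sub_nonneg.2 ((div_le_iff₀' hr).2 (hx.2.trans hbt))) ?_
    gcongr
    exact hx.2.trans hb.2
  calc ∫ x in (0 : ℝ)..b, ‖φ x t‖ ^ 2 ≤ ∫ _ in (0 : ℝ)..b, k ^ 2 * C :=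
        intervalIntegral.integral_mono_on hb.1
          (h.intervalIntegrable_norm_sq ht le_rfl hb.1 hb.2) intervalIntegrable_const hpointwise
    _ = b * (k ^ 2 * C) := by rw [intervalIntegral.integral_const, sub_zero, smul_eq_mul]
    _ ≤ L * (k ^ 2 * C) := by gcongr; exact hb.2

theorem integral_profile_le (h : IsClosedLoopSolution r L k φ ξ) (hr : 0 < r) (hL : 0 ≤ L)
    (hω : 0 ≤ ω) (hA : ∀ s ≥ 0, ‖ξ s‖ ^ 2 ≤ A * exp (-ω * s)) (ht : 0 ≤ t) :
    ∫ x in (0 : ℝ)..L, ‖φ x t‖ ^ 2 ≤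
      exp (ω * (L / r)) * (L * k ^ 2 * A + ∫ x in (0 : ℝ)..L, ‖φ x 0‖ ^ 2) * exp (-ω * t) := by
  have hA0 : 0 ≤ A := by simpa using (sq_nonneg _).trans (hA 0 le_rfl)
  set I := ∫ x in (0 : ℝ)..L, ‖φ x 0‖ ^ 2
  have hI : 0 ≤ I := intervalIntegral.integral_nonneg hL fun _ _ => sq_nonneg _
  set Q := exp (ω * (L / r)) * exp (-ω * t) with hQ
  have hrecent : ∀ s ≥ 0, t - L / r ≤ s → ‖ξ s‖ ^ 2 ≤ A * Q := fun s hs hts => by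
    refine (hA s hs).trans ?_
    rw [hQ, ← exp_add]
    gcongr
    nlinarith
  rw [show exp (ω * (L / r)) * (L * k ^ 2 * A + I) * exp (-ω * t) =
    L * (k ^ 2 * (A * Q)) + I * Q by ring]
  rcases le_total L (r * t) with hLt | htL
  · have hinflow := h.integral_inflow_le hr (right_mem_Icc.2 hL) hLt hrecent
    exact hinflow.trans (le_add_of_nonneg_right (by positivity))
  · have hrt : 0 ≤ r * t := mul_nonneg hr.le ht
    have hQ1 : 1 ≤ Q := by
      have htT : t ≤ L / r := (le_div_iff₀' hr).2 htL
      rw [hQ, ← exp_add]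
      exact one_le_exp (by nlinarith)
    rw [← intervalIntegral.integral_add_adjacent_intervals
      (h.intervalIntegrable_norm_sq ht le_rfl hrt htL)
      (h.intervalIntegrable_norm_sq ht hrt htL le_rfl)]
    exact add_le_add (h.integral_inflow_le hr ⟨hrt, htL⟩ le_rfl hrecent)
      ((h.integral_transported_le hr ht htL).trans (le_mul_of_one_le_right hI hQ1))

theorem norm_sq_integrator_le_mul_exp (h : IsClosedLoopSolution r L k φ ξ) (hr : 0 < r)
    (hL : 0 < L) (hk : 0 ≤ k) (hω : 0 ≤ ω)
    (hrate : k * (k * (L / r) * exp (2 * ω * (L / r))) ≤ k - ω) (ht : 0 ≤ t) :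
    ‖ξ t‖ ^ 2 ≤ ((1 + k * (L / r)) * exp (2 * ω * (L / r))) ^ 2 * (2 * (1 + L / r * r⁻¹)) *
      energy L φ ξ 0 * exp (-(2 * ω) * t) := by
  have hinitial : ∀ s ∈ Icc 0 (L / r), ‖ξ s‖ ≤ √(2 * (1 + L / r * r⁻¹) * energy L φ ξ 0) :=
    fun s hs => le_sqrt_of_sq_le (h.norm_sq_integrator_le hr hL.le hs)
  have hdecay := (h.isDelaySolution hr hL).norm_le_mul_exp (div_pos hL hr) hk hω hrate hinitial ht
  have hE := energy_nonneg hL.le φ ξ 0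
  refine (pow_le_pow_left₀ (norm_nonneg _) hdecay 2).trans_eq ?_
  rw [mul_pow, mul_pow, mul_pow, sq_sqrt (by positivity), ← exp_nat_mul (-ω * t)]
  push_cast
  ring_nf

end IsClosedLoopSolution

theorem linear_exponential_stability_general {r L k : ℝ} (hL : 0 < L) (hk : 0 < k)
    (hkL : k * L < r) :
    ∃ M ≥ (1 : ℝ), ∃ ω > (0 : ℝ), ∀ (φ : ℝ → ℝ → E) (ξ : ℝ → E),
      IsClosedLoopSolution r L k φ ξ →
      ∀ t ≥ 0, energy L φ ξ t ≤ M * exp (-ω * t) * energy L φ ξ 0 := by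
  have hr : 0 < r := (mul_pos hk hL).trans hkL
  obtain ⟨ω, hω, hrate⟩ := exists_pos_decay_rate (T := L / r) hk
    (by rwa [← mul_div_assoc, div_lt_one hr])
  set A := ((1 + k * (L / r)) * exp (2 * ω * (L / r))) ^ 2 * (2 * (1 + L / r * r⁻¹))
  set Q := exp (2 * ω * (L / r))
  have hA : 0 ≤ A := by positivity
  have hQ : 1 ≤ Q := one_le_exp (by positivity)
  refine ⟨A + Q * (L * k ^ 2 * A + 1), ?_, 2 * ω, by positivity, fun φ ξ h t ht => ?_⟩
  · have hprod : 1 ≤ Q * (L * k ^ 2 * A + 1) :=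
      one_le_mul_of_one_le_of_one_le hQ (le_add_of_nonneg_left (by positivity))
    linarith
  have hξ : ∀ s ≥ 0, ‖ξ s‖ ^ 2 ≤ A * energy L φ ξ 0 * exp (-(2 * ω) * s) :=
    fun s hs => h.norm_sq_integrator_le_mul_exp hr hL hk.le hω.le hrate hs
  have hinit : ∫ x in (0 : ℝ)..L, ‖φ x 0‖ ^ 2 ≤ energy L φ ξ 0 :=
    le_add_of_nonneg_right (sq_nonneg _)
  calc energy L φ ξ t
      ≤ Q * (L * k ^ 2 * (A * energy L φ ξ 0) + ∫ x in (0 : ℝ)..L, ‖φ x 0‖ ^ 2) *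
          exp (-(2 * ω) * t) + A * energy L φ ξ 0 * exp (-(2 * ω) * t) :=
        add_le_add (h.integral_profile_le hr hL.le (by positivity) hξ ht) (hξ t ht)
    _ ≤ Q * (L * k ^ 2 * (A * energy L φ ξ 0) + energy L φ ξ 0) *
          exp (-(2 * ω) * t) + A * energy L φ ξ 0 * exp (-(2 * ω) * t) := by gcongr
    _ = (A + Q * (L * k ^ 2 * A + 1)) * exp (-(2 * ω) * t) * energy L φ ξ 0 := by ring

theorem piFun_le_one {z : ℝ} (hz : 0 ≤ z) : PiFun z ≤ 1 := by
  have hsqrt : √(z * (2 - z)) ≤ 1 := sqrt_le_one.2 (by nlinarith [sq_nonneg (z - 1)])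
  exact mul_le_one₀ hsqrt (exp_pos _).le (exp_le_one_iff.2 (by linarith))

theorem mul_lt_of_lt_mul_piFun {r L k z : ℝ} (hr : 0 < r) (hL : 0 < L) (hz : 0 ≤ z)
    (hk : k < r / (2 * L) * PiFun z) : k * L < r := by
  have hk' : k < r / (2 * L) :=
    hk.trans_le (mul_le_of_le_one_right (by positivity) (piFun_le_one hz))
  rw [lt_div_iff₀ (by positivity)] at hk'
  linarith

/-- exponential stability of the linear closed-loop system:
for `k_I ∈ (0, k_I*)` with `k_I* = (r/(2L))Π(2−√2)` there exist `M ≥ 1` and `ω > 0`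
such that every C¹ solution satisfies
`∫₀^L φ(x,t)² dx + ξ(t)² ≤ M e^{−ωt} (∫₀^L φ(x,0)² dx + ξ(0)²)` for all `t ≥ 0`. -/
theorem linear_exponential_stability (r L kI : ℝ) (hr : 0 < r) (hL : 0 < L)
    (hkI : kI ∈ Set.Ioo 0 (r / (2 * L) * PiFun (2 - Real.sqrt 2))) :
    ∃ M ≥ (1 : ℝ), ∃ ω > (0 : ℝ), ∀ (φ : ℝ → ℝ → ℝ) (ξ : ℝ → ℝ),
      ContDiffOn ℝ 1 (fun p : ℝ × ℝ => φ p.1 p.2) (Set.Icc 0 L ×ˢ Set.Ici 0) →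
      ContDiffOn ℝ 1 ξ (Set.Ici 0) →
      (∀ x ∈ Set.Ioo (0 : ℝ) L, ∀ t ∈ Set.Ici (0 : ℝ),
        deriv (fun τ => φ x τ) t = -r * deriv (fun y => φ y t) x) →
      (∀ t ∈ Set.Ici (0 : ℝ), deriv ξ t = φ L t) →
      (∀ t ∈ Set.Ici (0 : ℝ), φ 0 t = -kI * ξ t) →
      ∀ t ∈ Set.Ici (0 : ℝ),
        (∫ x in (0 : ℝ)..L, (φ x t) ^ 2) + (ξ t) ^ 2 ≤
          M * Real.exp (-ω * t) * ((∫ x in (0 : ℝ)..L, (φ x 0) ^ 2) + (ξ 0) ^ 2) := by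
  have hkL := mul_lt_of_lt_mul_piFun hr hL (sub_nonneg.2 (sqrt_le_iff.2 (by norm_num))) hkI.2
  obtain ⟨M, hM, ω, hω, hdecay⟩ := linear_exponential_stability_general (E := ℝ) hL hkI.1 hkL
  refine ⟨M, hM, ω, hω, fun φ ξ hφ hξ htransport hintegrator hinflow t ht => ?_⟩
  have hsol : IsClosedLoopSolution r L kI φ ξ := .of_contDiffOn hφ hξ
    (fun x hx t ht => htransport x hx t (le_of_lt ht)) (fun t ht => hintegrator t (le_of_lt ht))
    hinflow
  simpa only [energy, norm_eq_abs, sq_abs] using hdecay φ ξ hsol t ht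
end

section
/- Let r, L > 0, let k_I ∈ (0, k_I*) where k_I* = (r/(2L))·Π(2−√2), let μ ∈ (0, (2−√2)/L] with (r/(2L))·Π(μL) > k_I, set q₁ = 2k_I, q₂ = r k_I e^{−μL/2}, and let q₃, q₄ > 0. Define S(φ, ξ) = V(φ, ξ) + q₃ ∫₀^L e^{−μx} φ'(x)² dx + q₄ ∫₀^L e^{−μx} φ''(x)² dx. Then there exists a constant K ≥ 1 such that for every twice continuously differentiable φ : [0,L] → ℝ and every ξ ∈ ℝ, K^{−1}·(∫₀^L (φ(x)² + φ'(x)² + φ''(x)²) dx + ξ²) ≤ S(φ, ξ) ≤ K·(∫₀^L (φ(x)² + φ'(x)² + φ''(x)²) dx + ξ²). -/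
/-- The Lyapunov functional
`V(φ, ξ) = ∫₀^L (φ(x)² e^{−μx} + q₁ ξ φ(x) e^{−μx/2}) dx + q₂ ξ²`. -/
noncomputable def V (L μ q₁ q₂ : ℝ) (φ : ℝ → ℝ) (ξ : ℝ) : ℝ :=
  (∫ x in (0 : ℝ)..L, (φ x ^ 2 * Real.exp (-μ * x) + q₁ * ξ * φ x * Real.exp (-μ * x / 2)))
    + q₂ * ξ ^ 2

/-- The extended Lyapunov functional
`S(φ, ξ) = V(φ, ξ) + q₃ ∫₀^L e^{−μx} φ'(x)² dx + q₄ ∫₀^L e^{−μx} φ''(x)² dx`. -/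
noncomputable def S (L μ q₁ q₂ q₃ q₄ : ℝ) (φ : ℝ → ℝ) (ξ : ℝ) : ℝ :=
  V L μ q₁ q₂ φ ξ + q₃ * (∫ x in (0 : ℝ)..L, Real.exp (-μ * x) * (deriv φ x) ^ 2)
    + q₄ * (∫ x in (0 : ℝ)..L, Real.exp (-μ * x) * (deriv (deriv φ) x) ^ 2)

/-!
With `u x = e^{-μx/2} φ x`, the functional `V` is the integral over `[0, L]` of the binary quadratic
form `u² + q₁ u ξ + (q₂ / L) ξ²`, which is positive definite exactly when `L q₁² < 4 q₂`. A positive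
definite form is comparable to `u² + ξ²`, and on the compact interval the weight `e^{-μx}` is
comparable to `1`, so `S` is comparable to the squared norm term by term. For `q₁ = 2 k_I` and
`q₂ = r k_I e^{-μL/2}` definiteness reads `L k_I < r e^{-μL/2}`, and `k_I < (r / (2L)) Π(μL)` gives
twice as much because `√(z(2 - z)) ≤ 1`.
-/

open Set MeasureTheory

/-- Comparability on `s` of `F` and a nonnegative function `G`: each is bounded by a positive
constant multiple of the other. This is the calculus in which `S` is compared with the squared norm
one term at a time. The two constants are kept separate so that they can be chosen independently;
`ComparableOn.exists_one_le` merges them into one. -/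
def ComparableOn {α : Type*} (s : Set α) (F G : α → ℝ) : Prop :=
  ∃ m > 0, ∃ M > 0, ∀ p ∈ s, 0 ≤ G p ∧ m * G p ≤ F p ∧ F p ≤ M * G p

namespace ComparableOn

variable {α β : Type*} {s : Set α} {F G H F' G' : α → ℝ}

theorem refl (hG : ∀ p ∈ s, 0 ≤ G p) : ComparableOn s G G :=
  ⟨1, one_pos, 1, one_pos, fun p hp => by simpa using hG p hp⟩

theorem trans (hFG : ComparableOn s F G) (hGH : ComparableOn s G H) : ComparableOn s F H := by
  obtain ⟨m, hm, M, hM, hFG⟩ := hFG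
  obtain ⟨m', hm', M', hM', hGH⟩ := hGH
  refine ⟨m * m', mul_pos hm hm', M * M', mul_pos hM hM', fun p hp => ?_⟩
  obtain ⟨-, lower, upper⟩ := hFG p hp
  obtain ⟨hH, lower', upper'⟩ := hGH p hp
  refine ⟨hH, ?_, ?_⟩
  · calc m * m' * H p = m * (m' * H p) := mul_assoc ..
      _ ≤ m * G p := by gcongr
      _ ≤ F p := lower
  · calc F p ≤ M * G p := upper
      _ ≤ M * (M' * H p) := by gcongr
      _ = M * M' * H p := (mul_assoc ..).symm

theorem add (h : ComparableOn s F G) (h' : ComparableOn s F' G') :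
    ComparableOn s (fun p => F p + F' p) (fun p => G p + G' p) := by
  obtain ⟨m, hm, M, hM, h⟩ := h
  obtain ⟨m', hm', M', -, h'⟩ := h'
  refine ⟨min m m', lt_min hm hm', max M M', lt_max_of_lt_left hM, fun p hp => ?_⟩
  obtain ⟨hG, lower, upper⟩ := h p hp
  obtain ⟨hG', lower', upper'⟩ := h' p hp
  refine ⟨add_nonneg hG hG', ?_, ?_⟩
  · calc min m m' * (G p + G' p) = min m m' * G p + min m m' * G' p := mul_add ..
      _ ≤ m * G p + m' * G' p := by gcongr <;> simp
      _ ≤ F p + F' p := add_le_add lower lower'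
  · calc F p + F' p ≤ M * G p + M' * G' p := add_le_add upper upper'
      _ ≤ max M M' * G p + max M M' * G' p := by gcongr <;> simp
      _ = max M M' * (G p + G' p) := (mul_add ..).symm

theorem mul_right (h : ComparableOn s F G) (hH : ∀ p ∈ s, 0 ≤ H p) :
    ComparableOn s (fun p => F p * H p) (fun p => G p * H p) := by
  obtain ⟨m, hm, M, hM, h⟩ := h
  refine ⟨m, hm, M, hM, fun p hp => ?_⟩
  obtain ⟨hG, lower, upper⟩ := h p hp
  simp only [← mul_assoc]
  exact ⟨mul_nonneg hG (hH p hp), mul_le_mul_of_nonneg_right lower (hH p hp),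
    mul_le_mul_of_nonneg_right upper (hH p hp)⟩

theorem const_mul {c : ℝ} (hc : 0 < c) (h : ComparableOn s F G) :
    ComparableOn s (fun p => c * F p) G := by
  obtain ⟨m, hm, M, hM, h⟩ := h
  refine ⟨c * m, mul_pos hc hm, c * M, mul_pos hc hM, fun p hp => ?_⟩
  obtain ⟨hG, lower, upper⟩ := h p hp
  simp only [mul_assoc]
  exact ⟨hG, mul_le_mul_of_nonneg_left lower hc.le, mul_le_mul_of_nonneg_left upper hc.le⟩

theorem comp {t : Set β} {F G : β → ℝ} {γ : α → β} (h : ComparableOn t F G) (hγ : MapsTo γ s t) :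
    ComparableOn s (F ∘ γ) (G ∘ γ) := by
  obtain ⟨m, hm, M, hM, h⟩ := h
  exact ⟨m, hm, M, hM, fun p hp => h (γ p) (hγ hp)⟩

theorem congr (h : ComparableOn s F G) (hF : EqOn F F' s) (hG : EqOn G G' s) :
    ComparableOn s F' G' := by
  obtain ⟨m, hm, M, hM, h⟩ := h
  exact ⟨m, hm, M, hM, fun p hp => hF hp ▸ hG hp ▸ h p hp⟩

theorem intervalIntegral {a b : ℝ} {f g : α → ℝ → ℝ} (hab : a ≤ b)
    (h : ComparableOn (s ×ˢ Icc a b) f.uncurry g.uncurry)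
    (hf : ∀ p ∈ s, IntervalIntegrable (f p) volume a b)
    (hg : ∀ p ∈ s, IntervalIntegrable (g p) volume a b) :
    ComparableOn s (fun p => ∫ x in a..b, f p x) (fun p => ∫ x in a..b, g p x) := by
  obtain ⟨m, hm, M, hM, h⟩ := h
  refine ⟨m, hm, M, hM, fun p hp => ?_⟩
  simp only [← intervalIntegral.integral_const_mul]
  exact ⟨intervalIntegral.integral_nonneg hab fun x hx => (h (p, x) ⟨hp, hx⟩).1,
    intervalIntegral.integral_mono_on hab ((hg p hp).const_mul m) (hf p hp)
      fun x hx => (h (p, x) ⟨hp, hx⟩).2.1,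
    intervalIntegral.integral_mono_on hab (hf p hp) ((hg p hp).const_mul M)
      fun x hx => (h (p, x) ⟨hp, hx⟩).2.2⟩

theorem exists_one_le (h : ComparableOn s F G) :
    ∃ K : ℝ, 1 ≤ K ∧ ∀ p ∈ s, K⁻¹ * G p ≤ F p ∧ F p ≤ K * G p := by
  obtain ⟨m, hm, M, -, h⟩ := h
  refine ⟨max 1 (max m⁻¹ M), le_max_left .., fun p hp => ?_⟩
  obtain ⟨hG, lower, upper⟩ := h p hp
  have inv_le : (max 1 (max m⁻¹ M))⁻¹ ≤ m := inv_le_of_inv_le₀ hm (by simp)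
  have le_max : M ≤ max 1 (max m⁻¹ M) := by simp
  exact ⟨(mul_le_mul_of_nonneg_right inv_le hG).trans lower,
    upper.trans (mul_le_mul_of_nonneg_right le_max hG)⟩

end ComparableOn

theorem comparableOn_one_of_isCompact {X : Type*} [TopologicalSpace X] {t : Set X} {w : X → ℝ}
    (ht : IsCompact t) (hw : ContinuousOn w t) (hpos : ∀ x ∈ t, 0 < w x) :
    ComparableOn t w (fun _ => 1) := by
  obtain rfl | hne := t.eq_empty_or_nonempty
  · exact ⟨1, one_pos, 1, one_pos, by simp⟩
  obtain ⟨x₀, hx₀, hmin⟩ := ht.exists_isMinOn hne hw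
  obtain ⟨x₁, hx₁, hmax⟩ := ht.exists_isMaxOn hne hw
  refine ⟨w x₀, hpos x₀ hx₀, w x₁, hpos x₁ hx₁, fun x hx => ?_⟩
  simpa using ⟨hmin hx, hmax hx⟩

theorem comparableOn_integral_weight_mul {α : Type*} {s : Set α} {a b : ℝ} {w : ℝ → ℝ}
    {f : α → ℝ → ℝ} (hab : a ≤ b) (hw : ContinuousOn w (Icc a b)) (hpos : ∀ x ∈ Icc a b, 0 < w x)
    (hf : ∀ p ∈ s, IntervalIntegrable (f p) volume a b)
    (hf₀ : ∀ p ∈ s, ∀ x ∈ Icc a b, 0 ≤ f p x) :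
    ComparableOn s (fun p => ∫ x in a..b, w x * f p x) (fun p => ∫ x in a..b, f p x) := by
  have weight : ComparableOn (s ×ˢ Icc a b) (w ∘ Prod.snd) (fun _ => 1) :=
    (comparableOn_one_of_isCompact isCompact_Icc hw hpos).comp fun _ hz => hz.2
  have integrands := weight.mul_right (H := f.uncurry) fun z hz => hf₀ z.1 hz.1 z.2 hz.2
  simp only [one_mul] at integrands
  exact integrands.intervalIntegral hab
    (fun p hp => (hf p hp).continuousOn_mul (by rwa [uIcc_of_le hab])) hf

theorem comparableOn_posDef_form {c d : ℝ} (hcd : c ^ 2 < 4 * d) :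
    ComparableOn univ (fun z : ℝ × ℝ => z.1 ^ 2 + c * z.2 * z.1 + d * z.2 ^ 2)
      (fun z => z.1 ^ 2 + z.2 ^ 2) := by
  have hd : 0 < 1 + d := by nlinarith [sq_nonneg c]
  -- The determinant divided by the trace is a lower bound for the smaller eigenvalue of the form.
  refine ⟨(4 * d - c ^ 2) / (4 * (1 + d)), div_pos (by linarith) (by linarith), 1 + d, hd, ?_⟩
  rintro ⟨u, v⟩ -
  refine ⟨by positivity, ?_, ?_⟩
  · have sum_sq : 4 * (1 + d) * (u ^ 2 + c * v * u + d * v ^ 2) =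
        (4 * d - c ^ 2) * (u ^ 2 + v ^ 2) + ((2 * u + c * v) ^ 2 + (c * u + 2 * d * v) ^ 2) := by
      ring
    rw [div_mul_eq_mul_div, div_le_iff₀' (by linarith), sum_sq]
    exact le_add_of_nonneg_right (by positivity)
  · have sum_sq : (1 + d) * (u ^ 2 + v ^ 2) - (u ^ 2 + c * v * u + d * v ^ 2) =
        (v - c * u / 2) ^ 2 + (d - c ^ 2 / 4) * u ^ 2 := by
      ring
    have : 0 < d - c ^ 2 / 4 := by linarith
    rw [← sub_nonneg, sum_sq]
    positivity

theorem intervalIntegrable_iteratedDeriv_sq {a b : ℝ} {n k : ℕ} {φ : ℝ → ℝ} (hab : a < b)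
    (hφ : ContDiffOn ℝ n φ (Icc a b)) (hk : k ≤ n) :
    IntervalIntegrable (fun x => iteratedDeriv k φ x ^ 2) volume a b := by
  have unique := uniqueDiffOn_Icc hab
  have cont : ContinuousOn (fun x => iteratedDerivWithin k φ (Icc a b) x ^ 2) (uIcc a b) := by
    rw [uIcc_of_le hab.le]
    exact (hφ.continuousOn_iteratedDerivWithin (mod_cast hk) unique).pow 2
  refine cont.intervalIntegrable.congr_uIoo fun x hx => ?_
  rw [uIoo_of_le hab.le] at hx
  have contDiffAt : ContDiffAt ℝ k φ x :=
    (hφ.contDiffAt (Icc_mem_nhds hx.1 hx.2)).of_le (mod_cast hk)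
  simp only [iteratedDerivWithin_eq_iteratedDeriv unique contDiffAt (Ioo_subset_Icc_self hx)]

theorem V_eq_integral_form {L : ℝ} (hL : L ≠ 0) (μ q₁ q₂ : ℝ) {φ : ℝ → ℝ} (ξ : ℝ)
    (hφ : ContinuousOn φ (uIcc 0 L)) :
    V L μ q₁ q₂ φ ξ = ∫ x in (0 : ℝ)..L, ((φ x * Real.exp (-μ * x / 2)) ^ 2
      + q₁ * ξ * (φ x * Real.exp (-μ * x / 2)) + q₂ / L * ξ ^ 2) := by
  have exp_sq (x : ℝ) : Real.exp (-μ * x) = Real.exp (-μ * x / 2) ^ 2 := by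
    rw [← Real.exp_nat_mul]
    ring_nf
  have const_term : ∫ _ in (0 : ℝ)..L, q₂ / L * ξ ^ 2 = q₂ * ξ ^ 2 := by
    rw [intervalIntegral.integral_const, smul_eq_mul, sub_zero]
    field_simp
  rw [intervalIntegral.integral_add (ContinuousOn.intervalIntegrable (by fun_prop))
    intervalIntegrable_const, const_term]
  simp only [V, exp_sq, mul_pow, mul_assoc]

theorem comparableOn_integral_form {α : Type*} {s : Set α} {a b c d : ℝ} (hab : a ≤ b)
    (hcd : c ^ 2 < 4 * d) {u : α → ℝ → ℝ} {ξ : α → ℝ}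
    (hu : ∀ p ∈ s, ContinuousOn (u p) (uIcc a b)) :
    ComparableOn s (fun p => ∫ x in a..b, (u p x ^ 2 + c * ξ p * u p x + d * ξ p ^ 2))
      (fun p => ∫ x in a..b, (u p x ^ 2 + ξ p ^ 2)) := by
  refine ComparableOn.intervalIntegral hab ((comparableOn_posDef_form hcd).comp
    (γ := fun z : α × ℝ => (u z.1 z.2, ξ z.1)) (mapsTo_univ _ _)) ?_ ?_ <;>
  · intro p hp
    have := hu p hp
    exact ContinuousOn.intervalIntegrable (by fun_prop)

theorem comparableOn_V {L q₁ q₂ : ℝ} (hL : 0 < L) (μ : ℝ) (hq : L * q₁ ^ 2 < 4 * q₂) :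
    ComparableOn {p : (ℝ → ℝ) × ℝ | ContinuousOn p.1 (Icc 0 L)} (fun p => V L μ q₁ q₂ p.1 p.2)
      (fun p => (∫ x in (0 : ℝ)..L, p.1 x ^ 2) + p.2 ^ 2) := by
  rw [← uIcc_of_le hL.le]
  set s := {p : (ℝ → ℝ) × ℝ | ContinuousOn p.1 (uIcc 0 L)}
  have form_posDef : q₁ ^ 2 < 4 * (q₂ / L) := by
    rwa [← mul_div_assoc, lt_div_iff₀' hL]
  have V_form := comparableOn_integral_form hL.le form_posDef (s := s)
    (u := fun p x => p.1 x * Real.exp (-μ * x / 2)) (ξ := Prod.snd)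
    (fun p hp => by have : ContinuousOn p.1 (uIcc 0 L) := hp; fun_prop)
  have weight := comparableOn_integral_weight_mul hL.le (s := s)
    (w := fun x => Real.exp (-μ * x / 2) ^ 2) (f := fun p x => p.1 x ^ 2)
    (by fun_prop) (fun x _ => by positivity) (fun p hp => (hp.pow 2).intervalIntegrable)
    (fun p _ x _ => sq_nonneg _)
  have norm_weight := weight.add
    ((ComparableOn.refl (G := fun p => p.2 ^ 2) fun p _ => sq_nonneg p.2).const_mul hL)
  refine (V_form.congr (fun p hp => (V_eq_integral_form hL.ne' μ q₁ q₂ p.2 hp).symm)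
    fun p hp => ?_).trans norm_weight
  have : ContinuousOn p.1 (uIcc 0 L) := hp
  simp only [mul_pow, mul_comm (p.1 _ ^ 2)]
  rw [intervalIntegral.integral_add (ContinuousOn.intervalIntegrable (by fun_prop))
    intervalIntegrable_const, intervalIntegral.integral_const, smul_eq_mul, sub_zero]

theorem comparableOn_S {L q₁ q₂ q₃ q₄ : ℝ} (hL : 0 < L) (μ : ℝ) (hq : L * q₁ ^ 2 < 4 * q₂)
    (hq₃ : 0 < q₃) (hq₄ : 0 < q₄) :
    ComparableOn {p : (ℝ → ℝ) × ℝ | ContDiffOn ℝ 2 p.1 (Icc 0 L)}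
      (fun p => S L μ q₁ q₂ q₃ q₄ p.1 p.2)
      (fun p => (∫ x in (0 : ℝ)..L, (p.1 x ^ 2 + deriv p.1 x ^ 2 + deriv (deriv p.1) x ^ 2))
        + p.2 ^ 2) := by
  set s := {p : (ℝ → ℝ) × ℝ | ContDiffOn ℝ 2 p.1 (Icc 0 L)}
  have integrable (k : ℕ) (hk : k ≤ 2) (p : (ℝ → ℝ) × ℝ) (hp : p ∈ s) :
      IntervalIntegrable (fun x => iteratedDeriv k p.1 x ^ 2) volume 0 L :=
    intervalIntegrable_iteratedDeriv_sq hL hp hk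
  have weighted (k : ℕ) (hk : k ≤ 2) := comparableOn_integral_weight_mul hL.le
    (w := fun x => Real.exp (-μ * x)) (by fun_prop) (fun x _ => Real.exp_pos _)
    (integrable k hk) (fun p _ x _ => sq_nonneg _)
  have V_part := (comparableOn_V hL μ hq).comp (s := s) (γ := id) fun p hp => hp.continuousOn
  refine ((V_part.add ((weighted 1 (by norm_num)).const_mul hq₃)).add
    ((weighted 2 le_rfl).const_mul hq₄)).congr (fun p _ => ?_) fun p hp => ?_
  · simp [S, iteratedDeriv_succ]
  · have integrable₀ := integrable 0 (by norm_num) p hp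
    have integrable₁ := integrable 1 (by norm_num) p hp
    have integrable₂ := integrable 2 le_rfl p hp
    simp only [iteratedDeriv_succ, iteratedDeriv_zero] at integrable₀ integrable₁ integrable₂ ⊢
    rw [intervalIntegral.integral_add (integrable₀.add integrable₁) integrable₂,
      intervalIntegral.integral_add integrable₀ integrable₁]
    simp only [Function.comp_apply, id]
    ring

theorem PiFun_le_exp (z : ℝ) : PiFun z ≤ Real.exp (-z / 2) := by
  have sqrt_le_one : √(z * (2 - z)) ≤ 1 :=
    Real.sqrt_le_one.2 (by nlinarith [sq_nonneg (z - 1)])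
  exact mul_le_of_le_one_left (Real.exp_pos _).le sqrt_le_one

theorem mul_two_mul_sq_lt_of_lt_PiFun {r L kI μ : ℝ} (hr : 0 < r) (hL : 0 < L) (hkI : 0 < kI)
    (h : kI < r / (2 * L) * PiFun (μ * L)) :
    L * (2 * kI) ^ 2 < 4 * (r * kI * Real.exp (-μ * L / 2)) := by
  have lt_exp : 2 * L * kI < r * Real.exp (-μ * L / 2) := by
    calc 2 * L * kI < 2 * L * (r / (2 * L) * PiFun (μ * L)) := by gcongr
      _ = r * PiFun (μ * L) := by field_simp
      _ ≤ r * Real.exp (-μ * L / 2) := by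
        rw [neg_mul]
        gcongr
        exact PiFun_le_exp _
  calc L * (2 * kI) ^ 2 = 2 * kI * (2 * L * kI) := by ring
    _ < 2 * kI * (r * Real.exp (-μ * L / 2)) := by gcongr
    _ ≤ 4 * (r * kI * Real.exp (-μ * L / 2)) := by
      have : 0 < r * kI * Real.exp (-μ * L / 2) := by positivity
      linarith

theorem S_equiv_H2_norm_general (L μ q₁ q₂ q₃ q₄ : ℝ) (hL : 0 < L) (hq : L * q₁ ^ 2 < 4 * q₂)
    (hq₃ : 0 < q₃) (hq₄ : 0 < q₄) :
    ∃ K : ℝ, 1 ≤ K ∧ ∀ (φ : ℝ → ℝ) (ξ : ℝ), ContDiffOn ℝ 2 φ (Icc 0 L) →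
      K⁻¹ * ((∫ x in (0 : ℝ)..L, (φ x ^ 2 + deriv φ x ^ 2 + deriv (deriv φ) x ^ 2)) + ξ ^ 2) ≤
          S L μ q₁ q₂ q₃ q₄ φ ξ ∧
        S L μ q₁ q₂ q₃ q₄ φ ξ ≤
          K * ((∫ x in (0 : ℝ)..L, (φ x ^ 2 + deriv φ x ^ 2 + deriv (deriv φ) x ^ 2)) + ξ ^ 2) := by
  obtain ⟨K, one_le_K, hK⟩ := (comparableOn_S hL μ hq hq₃ hq₄).exists_one_le
  exact ⟨K, one_le_K, fun φ ξ hφ => hK (φ, ξ) hφ⟩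

/-- the extended Lyapunov functional `S` is equivalent to the squared
`H²`-type norm: there is `K ≥ 1` with
`K⁻¹(∫₀^L (φ² + φ'² + φ''²) + ξ²) ≤ S(φ,ξ) ≤ K(∫₀^L (φ² + φ'² + φ''²) + ξ²)`. -/
theorem S_equiv_H2_norm (r L kI μ q₃ q₄ : ℝ) (hr : 0 < r) (hL : 0 < L)
    (hkI : kI ∈ Set.Ioo 0 (r / (2 * L) * PiFun (2 - Real.sqrt 2)))
    (hμ : μ ∈ Set.Ioc 0 ((2 - Real.sqrt 2) / L))
    (hμkI : r / (2 * L) * PiFun (μ * L) > kI)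
    (hq₃ : 0 < q₃) (hq₄ : 0 < q₄) :
    ∃ K : ℝ, 1 ≤ K ∧ ∀ (φ : ℝ → ℝ) (ξ : ℝ), ContDiffOn ℝ 2 φ (Set.Icc 0 L) →
      K⁻¹ * ((∫ x in (0 : ℝ)..L,
            ((φ x) ^ 2 + (deriv φ x) ^ 2 + (deriv (deriv φ) x) ^ 2)) + ξ ^ 2) ≤
          S L μ (2 * kI) (r * kI * Real.exp (-μ * L / 2)) q₃ q₄ φ ξ ∧
        S L μ (2 * kI) (r * kI * Real.exp (-μ * L / 2)) q₃ q₄ φ ξ ≤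
          K * ((∫ x in (0 : ℝ)..L,
            ((φ x) ^ 2 + (deriv φ x) ^ 2 + (deriv (deriv φ) x) ^ 2)) + ξ ^ 2) :=
  S_equiv_H2_norm_general L μ _ _ q₃ q₄ hL (mul_two_mul_sq_lt_of_lt_PiFun hr hL hkI.1 hμkI) hq₃ hq₄
end
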